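/- arXiv:2011.10018 — 7 statements merged into one kernel-verified Lean document; each statement's English description precedes it below -/
import Mathlib

section
/- For every b = (b₀,…,b_{n−1}) ∈ Kⁿ and every 1 ≤ k ≤ n, the element e_k(β₁(b),…,βₙ(b)) of L lies in the image of K in L; that is, there exists c ∈ K with algebraMap K L c = e_k(β₁(b),…,βₙ(b)). -/
open Polynomial

/-!
If `φ` is symmetric, then so is `φ(q(X₁), …, q(Xₙ))` for every one-variable polynomial `q`, so it
is a polynomial in the elementary symmetric polynomials. By Vieta, these take at the roots of `p`
the coefficients of `p`, up to sign, as values.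
-/

theorem isSymmetric_bind₁ {σ R : Type*} [CommSemiring R] {φ : MvPolynomial σ R}
    (hφ : φ.IsSymmetric) {f : σ → MvPolynomial σ R}
    (hf : ∀ (e : Equiv.Perm σ) (i : σ), MvPolynomial.rename e (f i) = f (e i)) :
    (MvPolynomial.bind₁ f φ).IsSymmetric := by
  intro e
  calc MvPolynomial.rename e (MvPolynomial.bind₁ f φ)
      = MvPolynomial.bind₁ (f ∘ e) φ := by
        simp only [MvPolynomial.rename_bind₁, hf, Function.comp_def]
    _ = MvPolynomial.bind₁ f (MvPolynomial.rename e φ) := (MvPolynomial.bind₁_rename f e φ).symm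
    _ = MvPolynomial.bind₁ f φ := by rw [hφ e]

theorem isSymmetric_bind₁_aeval_X {σ R : Type*} [CommSemiring R] {φ : MvPolynomial σ R}
    (hφ : φ.IsSymmetric) (q : R[X]) :
    (MvPolynomial.bind₁ (fun i => aeval (MvPolynomial.X i) q) φ).IsSymmetric :=
  isSymmetric_bind₁ hφ fun e i => by rw [← aeval_algHom_apply, MvPolynomial.rename_X]

section Roots

variable {R S ι : Type*} [CommRing R] [CommRing S] [Algebra R S] [Fintype ι] {p : R[X]} {α : ι → S}

theorem aeval_esymm_eq_algebraMap_coeff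
    (hroots : p.map (algebraMap R S) = ∏ i, (X - C (α i))) {k : ℕ} (hk : k ≤ Fintype.card ι) :
    MvPolynomial.aeval α (MvPolynomial.esymm ι R k) =
      algebraMap R S ((-1) ^ k * p.coeff (Fintype.card ι - k)) := by
  have vieta : algebraMap R S (p.coeff (Fintype.card ι - k)) =
      (-1) ^ k * (Finset.univ.val.map α).esymm k := by
    rw [← coeff_map, hroots]
    simpa [Nat.sub_sub_self hk] using
      Multiset.prod_X_sub_C_coeff (Finset.univ.val.map α) (k := Fintype.card ι - k) (by simp)
  rw [MvPolynomial.aeval_esymm_eq_multiset_esymm, map_mul, vieta, ← mul_assoc]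
  simp [← mul_pow]

theorem aeval_mem_range_algebraMap_of_isSymmetric
    (hroots : p.map (algebraMap R S) = ∏ i, (X - C (α i))) {φ : MvPolynomial ι R}
    (hφ : φ.IsSymmetric) : MvPolynomial.aeval α φ ∈ (algebraMap R S).range := by
  obtain ⟨ψ, hψ⟩ := MvPolynomial.esymmAlgHom_surjective R (le_refl (Fintype.card ι)) ⟨φ, hφ⟩
  have φ_eq : MvPolynomial.bind₁
      (fun i : Fin (Fintype.card ι) => MvPolynomial.esymm ι R (i + 1)) ψ = φ :=
    (MvPolynomial.esymmAlgHom_apply ψ).symm.trans (congrArg Subtype.val hψ)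
  let c (i : Fin (Fintype.card ι)) : R :=
    (-1) ^ (i + 1 : ℕ) * p.coeff (Fintype.card ι - (i + 1))
  refine ⟨MvPolynomial.aeval c ψ, ?_⟩
  calc algebraMap R S (MvPolynomial.aeval c ψ)
      = MvPolynomial.aeval (algebraMap R S ∘ c) ψ :=
        (MvPolynomial.aeval_algebraMap_apply S c ψ).symm
    _ = MvPolynomial.aeval (fun i : Fin (Fintype.card ι) =>
          MvPolynomial.aeval α (MvPolynomial.esymm ι R (i + 1))) ψ := by
        simp only [c, Function.comp_def,
          aeval_esymm_eq_algebraMap_coeff hroots (Nat.succ_le_of_lt (Fin.is_lt _))]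
    _ = MvPolynomial.aeval α φ := by rw [← φ_eq, MvPolynomial.aeval_bind₁]

theorem aeval_aeval_mem_range_algebraMap_of_isSymmetric
    (hroots : p.map (algebraMap R S) = ∏ i, (X - C (α i))) {φ : MvPolynomial ι R}
    (hφ : φ.IsSymmetric) (q : R[X]) :
    MvPolynomial.aeval (fun i => aeval (α i) q) φ ∈ (algebraMap R S).range := by
  simpa only [MvPolynomial.aeval_bind₁, ← aeval_algHom_apply, MvPolynomial.aeval_X] using
    aeval_mem_range_algebraMap_of_isSymmetric hroots (isSymmetric_bind₁_aeval_X hφ q)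

theorem stmt_2_general (hroots : p.map (algebraMap R S) = ∏ i, (X - C (α i)))
    {m : ℕ} (b : Fin m → R) (k : ℕ) :
    ∃ c : R, algebraMap R S c =
      MvPolynomial.eval (fun i => ∑ j : Fin m, algebraMap R S (b j) * α i ^ (j : ℕ))
        (MvPolynomial.esymm ι S k) := by
  obtain ⟨c, hc⟩ := aeval_aeval_mem_range_algebraMap_of_isSymmetric hroots
    (MvPolynomial.esymm_isSymmetric ι R k) (∑ j : Fin m, C (b j) * X ^ (j : ℕ))
  refine ⟨c, hc.trans ?_⟩
  rw [← MvPolynomial.map_esymm ι R k (algebraMap R S), MvPolynomial.eval_map,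
    ← MvPolynomial.aeval_def]
  simp only [map_sum, map_mul, map_pow, aeval_C, aeval_X]

end Roots

/-- Claim 4.3, first part: with `p` a monic separable irreducible polynomial of
degree `n ≥ 1` over `K`, `L` a splitting field of `p`, and `α₁,…,αₙ` the distinct
roots of `p` in `L`, for every `b ∈ Kⁿ` and `1 ≤ k ≤ n` the elementary symmetric
function `e_k(β₁(b),…,βₙ(b))`, where `β_i(b) = b₀ + b₁α_i + ⋯ + b_{n−1}α_i^{n−1}`,
lies in the image of `K` in `L`. -/
theorem stmt_2 {K L : Type*} [Field K] [Field L] [Algebra K L]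
    (n : ℕ) (hn : 1 ≤ n) (p : K[X]) (hpm : p.Monic) (hps : p.Separable)
    (hpi : Irreducible p) (hpd : p.natDegree = n) [IsSplittingField K L p]
    (α : Fin n → L) (hα : Function.Injective α)
    (hroots : p.map (algebraMap K L) = ∏ i : Fin n, (X - C (α i)))
    (b : Fin n → K) (k : ℕ) (hk1 : 1 ≤ k) (hkn : k ≤ n) :
    ∃ c : K, algebraMap K L c =
      MvPolynomial.eval
        (fun i : Fin n => ∑ j : Fin n, algebraMap K L (b j) * α i ^ (j : ℕ))
        (MvPolynomial.esymm (Fin n) L k) :=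
  stmt_2_general hroots b k
end

section
/- Suppose b = (b₀,…,b_{n−1}) ∈ Kⁿ is such that the elements 1, β₁(b), β₁(b)², …, β₁(b)^{n−1} of L are linearly independent over K (equivalently, the subfield K(β₁(b)) of L equals K(α₁)). Then the minimal polynomial of β₁(b) over K has degree n, is separable, and its image in L[x] under the algebra map equals the product ∏_{i=1}^{n} (x − β_i(b)); in particular K(β₁(b)) = K(α₁) as subfields of L. -/
open Polynomial

/-!
Write `βᵢ = q(αᵢ)`. The resultant `Res_Y (p(Y), X - q(Y))` has coefficients in `K` and equals
`∏ᵢ (X - βᵢ)`, so each `βᵢ` is a root of a monic polynomial of degree `n` over `K`. Independence of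
the first `n` powers of `β₁` says that the minimal polynomial of `β₁` has degree at least `n`, so
it is this resultant. Moreover `n ≤ [K(β₁) : K] ≤ [K(α₁) : K] ≤ n` with `K(β₁) ⊆ K(α₁)`, so the
two fields coincide, `p` is the minimal polynomial of `α₁`, and separability passes between the
generators `α₁` and `β₁`.
-/

section Tschirnhaus

variable {R : Type*} [CommRing R]

/-- The Tschirnhaus transform `Res_Y (p(Y), X - q(Y))` of `p` by `q`, whose roots are the values of
`q` at the roots of `p` when `p` is monic. The inner variable of `R[X][X]` is `X` and the outer one
is `Y`. The formal degrees are fixed as those of `p` and `q`, because the resultant commutes with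
ring homomorphisms only when its formal degrees do not change. -/
noncomputable def tschirnhaus (p q : R[X]) : R[X] :=
  resultant (p.map C) (C X - q.map C) p.natDegree q.natDegree

variable {S ι : Type*} [CommRing S] [Algebra R S] [Fintype ι] {p : R[X]} {α : ι → S}

theorem aeval_eq_zero_of_map_eq_prod_X_sub_C
    (hroots : p.map (algebraMap R S) = ∏ i, (X - C (α i))) (i : ι) : aeval (α i) p = 0 := by
  rw [← eval_map_algebraMap, hroots, eval_prod]
  exact Finset.prod_eq_zero (Finset.mem_univ i) (by simp)

theorem map_tschirnhaus (hp : p.Monic)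
    (hroots : p.map (algebraMap R S) = ∏ i, (X - C (α i))) (q : R[X]) :
    (tschirnhaus p q).map (algebraMap R S) = ∏ i, (X - C (aeval (α i) q)) := by
  nontriviality S
  let φ := mapRingHom (algebraMap R S)
  have hp_map : (p.map C).map φ = ∏ i, (X - C (C (α i))) := by
    rw [map_map, mapRingHom_comp_C, ← map_map, hroots, Polynomial.map_prod]
    simp only [Polynomial.map_sub, map_X, map_C]
  have hq_map : (C X - q.map C).map φ = C X - (q.map (algebraMap R S)).map C := by
    simp [φ, map_map, mapRingHom_comp_C]
  have hp_deg : p.natDegree = (∏ i, (X - C (C (α i))) : S[X][X]).natDegree := by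
    rw [← hp_map, map_map, hp.natDegree_map]
  have hq_deg : (C X - (q.map (algebraMap R S)).map C).natDegree ≤ q.natDegree := by
    refine (natDegree_sub_le _ _).trans (max_le (by simp) ?_)
    exact natDegree_map_le.trans natDegree_map_le
  calc (tschirnhaus p q).map (algebraMap R S)
      = resultant (∏ i, (X - C (C (α i)))) (C X - (q.map (algebraMap R S)).map C)
          p.natDegree q.natDegree := by
        rw [← hp_map, ← hq_map, resultant_map_map]; rfl
    _ = ∏ i, (C X - (q.map (algebraMap R S)).map C).eval (C (α i)) := by
        rw [hp_deg, resultant_prod_left _ _ _ _ (by simp) hq_deg]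
        refine Finset.prod_congr rfl fun i _ => ?_
        rw [natDegree_X_sub_C, ← pow_one (X - C _),
          resultant_X_sub_C_pow_left _ _ _ _ hq_deg, pow_one]
    _ = ∏ i, (X - C (aeval (α i) q)) := by
        simp [eval_map_apply, eval_map_algebraMap]

theorem monic_tschirnhaus [FaithfulSMul R S] (hp : p.Monic)
    (hroots : p.map (algebraMap R S) = ∏ i, (X - C (α i))) (q : R[X]) :
    (tschirnhaus p q).Monic := by
  refine monic_of_injective (FaithfulSMul.algebraMap_injective R S) ?_
  rw [map_tschirnhaus hp hroots]
  exact monic_prod_X_sub_C _ _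

theorem natDegree_tschirnhaus [FaithfulSMul R S] (hp : p.Monic)
    (hroots : p.map (algebraMap R S) = ∏ i, (X - C (α i))) (q : R[X]) :
    (tschirnhaus p q).natDegree = p.natDegree := by
  nontriviality R
  have hinj := FaithfulSMul.algebraMap_injective R S
  have := hinj.nontrivial
  rw [← natDegree_map_eq_of_injective hinj, ← natDegree_map_eq_of_injective hinj p,
    map_tschirnhaus hp hroots, hroots, natDegree_finsetProd_X_sub_C_eq_card,
    natDegree_finsetProd_X_sub_C_eq_card]

theorem minpoly_aeval_eq_tschirnhaus [FaithfulSMul R S] (hp : p.Monic)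
    (hroots : p.map (algebraMap R S) = ∏ i, (X - C (α i))) (q : R[X]) (i : ι)
    (hind : LinearIndependent R fun j : Fin p.natDegree => aeval (α i) q ^ (j : ℕ)) :
    minpoly R (aeval (α i) q) = tschirnhaus p q := by
  nontriviality R
  have hmonic := monic_tschirnhaus hp hroots q
  have hdeg : (tschirnhaus p q).degree = p.natDegree := by
    rw [degree_eq_natDegree hmonic.ne_zero, natDegree_tschirnhaus hp hroots]
  exact minpoly.eq_of_linearIndependent R _ hmonic
    (aeval_eq_zero_of_map_eq_prod_X_sub_C (map_tschirnhaus hp hroots q) i) _ hdeg hind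

end Tschirnhaus

section Minpoly

variable {K L : Type*} [Field K] [Field L] [Algebra K L]

theorem natDegree_minpoly_le_of_mem_adjoin_simple {x y : L} (hx : IsIntegral K x)
    (hy : y ∈ IntermediateField.adjoin K {x}) :
    (minpoly K y).natDegree ≤ (minpoly K x).natDegree := by
  have := IntermediateField.adjoin.finiteDimensional hx
  rw [← IntermediateField.adjoin.finrank hx,
    ← IntermediateField.minpoly_eq (⟨y, hy⟩ : IntermediateField.adjoin K {x})]
  exact minpoly.natDegree_le _

theorem adjoin_simple_eq_of_natDegree_minpoly_le {x y : L} (hx : IsIntegral K x)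
    (hy : y ∈ IntermediateField.adjoin K {x})
    (hdeg : (minpoly K x).natDegree ≤ (minpoly K y).natDegree) :
    IntermediateField.adjoin K {y} = IntermediateField.adjoin K {x} := by
  have hy_int : IsIntegral K y := minpoly.ne_zero_iff.mp <| ne_zero_of_natDegree_gt <|
    (minpoly.natDegree_pos hx).trans_le hdeg
  have := IntermediateField.adjoin.finiteDimensional hx
  refine IntermediateField.eq_of_le_of_finrank_le
    (IntermediateField.adjoin_simple_le_iff.mpr hy) ?_
  rwa [IntermediateField.adjoin.finrank hx, IntermediateField.adjoin.finrank hy_int]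

theorem separable_minpoly_iff_of_adjoin_eq {x y : L}
    (h : IntermediateField.adjoin K {y} = IntermediateField.adjoin K {x}) :
    (minpoly K y).Separable ↔ (minpoly K x).Separable := by
  change IsSeparable K y ↔ IsSeparable K x
  rw [← IntermediateField.isSeparable_adjoin_simple_iff_isSeparable, h,
    IntermediateField.isSeparable_adjoin_simple_iff_isSeparable]

theorem stmt_3_general {ι : Type*} [Fintype ι] {n : ℕ} {p q : K[X]} (hpd : p.natDegree = n)
    {α β : ι → L} (hroots : p.map (algebraMap K L) = ∏ i, (X - C (α i)))
    (hβ : ∀ i, β i = aeval (α i) q) (i₀ : ι)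
    (hind : LinearIndependent K fun j : Fin n => β i₀ ^ (j : ℕ)) :
    (minpoly K (β i₀)).natDegree = n ∧
    ((minpoly K (β i₀)).Separable ↔ p.Separable) ∧
    (minpoly K (β i₀)).map (algebraMap K L) = ∏ i, (X - C (β i)) ∧
    IntermediateField.adjoin K {β i₀} = IntermediateField.adjoin K {α i₀} := by
  obtain rfl : β = fun i => aeval (α i) q := funext hβ
  subst hpd
  have hp : p.Monic := monic_of_injective (algebraMap K L).injective
    (hroots ▸ monic_prod_X_sub_C α Finset.univ)
  have hroot : aeval (α i₀) p = 0 := aeval_eq_zero_of_map_eq_prod_X_sub_C hroots i₀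
  have hint : IsIntegral K (α i₀) := ⟨p, hp, hroot⟩
  have hmem : aeval (α i₀) q ∈ IntermediateField.adjoin K {α i₀} :=
    IntermediateField.algebra_adjoin_le_adjoin K _ (aeval_mem_adjoin_singleton K _)
  have hmin_β : minpoly K (aeval (α i₀) q) = tschirnhaus p q :=
    minpoly_aeval_eq_tschirnhaus hp hroots q i₀ hind
  have hdeg : (minpoly K (aeval (α i₀) q)).natDegree = p.natDegree := by
    rw [hmin_β, natDegree_tschirnhaus hp hroots]
  have hmin_α : p = minpoly K (α i₀) :=
    eq_of_monic_of_dvd_of_natDegree_le (minpoly.monic hint) hp (minpoly.dvd K _ hroot)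
      (hdeg ▸ natDegree_minpoly_le_of_mem_adjoin_simple hint hmem)
  have hadj : IntermediateField.adjoin K {aeval (α i₀) q} = IntermediateField.adjoin K {α i₀} :=
    adjoin_simple_eq_of_natDegree_minpoly_le hint hmem (hmin_α ▸ hdeg.ge)
  refine ⟨hdeg, ?_, hmin_β ▸ map_tschirnhaus hp hroots q, hadj⟩
  rw [separable_minpoly_iff_of_adjoin_eq hadj, ← hmin_α]

end Minpoly

/-- Claim 4.3, second part: with `p` a monic separable irreducible polynomial of
degree `n ≥ 1` over `K`, `L` a splitting field of `p` with distinct roots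
`α₁,…,αₙ`, and `β_i(b) = b₀ + b₁α_i + ⋯ + b_{n−1}α_i^{n−1}`, if
`1, β₁(b), …, β₁(b)^{n−1}` are linearly independent over `K`, then the minimal
polynomial of `β₁(b)` over `K` has degree `n`, is separable, its image in `L[x]`
is `∏ᵢ (x − β_i(b))`, and `K(β₁(b)) = K(α₁)` inside `L`. -/
theorem stmt_3 {K L : Type*} [Field K] [Field L] [Algebra K L]
    (n : ℕ) (hn : 1 ≤ n) (p : K[X]) (hpm : p.Monic) (hps : p.Separable)
    (hpi : Irreducible p) (hpd : p.natDegree = n) [IsSplittingField K L p]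
    (α : Fin n → L) (hα : Function.Injective α)
    (hroots : p.map (algebraMap K L) = ∏ i : Fin n, (X - C (α i)))
    (b : Fin n → K) (β : Fin n → L)
    (hβ : β = fun i : Fin n => ∑ j : Fin n, algebraMap K L (b j) * α i ^ (j : ℕ))
    (hind : LinearIndependent K (fun j : Fin n => β ⟨0, hn⟩ ^ (j : ℕ))) :
    (minpoly K (β ⟨0, hn⟩)).natDegree = n ∧
    (minpoly K (β ⟨0, hn⟩)).Separable ∧
    (minpoly K (β ⟨0, hn⟩)).map (algebraMap K L) = ∏ i : Fin n, (X - C (β i)) ∧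
    IntermediateField.adjoin K {β ⟨0, hn⟩} = IntermediateField.adjoin K {α ⟨0, hn⟩} := by
  obtain ⟨hdeg, hsep, hmap_adj⟩ := stmt_3_general (q := ∑ j, C (b j) * X ^ (j : ℕ)) hpd hroots
    (by simp [hβ]) ⟨0, hn⟩ hind
  exact ⟨hdeg, hsep.mpr hps, hmap_adj⟩
end

section
/- Let R be a commutative ring, n ≥ 1, and a₁,…,aₙ ∈ R. Let M be the n×n matrix whose (k,j) entry is the formal partial derivative ∂e_k/∂x_j of the k-th elementary symmetric polynomial in n variables, evaluated at (a₁,…,aₙ). Then det M = ∏_{1 ≤ i < j ≤ n} (a_i − a_j). -/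
/-!
Write `e_k` for the elementary symmetric polynomials in all variables and `E_k` for those in the
variables other than `x_j`. Splitting off `x_j` gives `e_{k+1} = E_{k+1} + x_j E_k`, with two
consequences: `∂e_{k+1}/∂x_j = E_k`, and, by recursion on `k`, `E_k` is the value at `-x_j` of the
monic polynomial `p_k(T) = T ^ k + e_1 T ^ (k - 1) + ⋯ + e_k`, which does not depend on `j`. Since
`p_k` is monic of degree `k`, the Jacobian has the same determinant as the Vandermonde matrix at
the points `-x_j`.
-/

open Polynomial (C X)

section Multiset

variable {R : Type*}

theorem multiset_esymm_zero [CommSemiring R] (s : Multiset R) : s.esymm 0 = 1 := by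
  simp [Multiset.esymm]

theorem multiset_esymm_eq_zero_of_card_lt [CommSemiring R] {s : Multiset R} {k : ℕ}
    (h : s.card < k) : s.esymm k = 0 := by
  simp [Multiset.esymm, Multiset.powersetCard_eq_empty k h]

theorem multiset_esymm_cons_succ [CommSemiring R] (x : R) (s : Multiset R) (k : ℕ) :
    (x ::ₘ s).esymm (k + 1) = s.esymm (k + 1) + x * s.esymm k := by
  simp [Multiset.esymm, Multiset.powersetCard_cons, Multiset.sum_map_mul_left]

section Derivation

variable {A M : Type*} [CommSemiring A] [CommSemiring R] [Algebra A R] [AddCommMonoid M]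
  [Module A M] [Module R M] (D : Derivation A R M) {s : Multiset R}

theorem derivation_multiset_esymm_eq_zero (hs : ∀ y ∈ s, D y = 0) (k : ℕ) :
    D (s.esymm k) = 0 := by
  induction s using Multiset.induction generalizing k with
  | empty =>
    cases k with
    | zero => rw [multiset_esymm_zero, D.map_one_eq_zero]
    | succ k => rw [multiset_esymm_eq_zero_of_card_lt k.succ_pos, map_zero]
  | cons x s ih =>
    obtain ⟨hx, hs⟩ := Multiset.forall_mem_cons.1 hs
    cases k with
    | zero => rw [multiset_esymm_zero, D.map_one_eq_zero]
    | succ k => simp [multiset_esymm_cons_succ, ih hs, hx]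

theorem derivation_multiset_esymm_cons_succ (x : R) (hs : ∀ y ∈ s, D y = 0) (k : ℕ) :
    D ((x ::ₘ s).esymm (k + 1)) = s.esymm k • D x := by
  simp [multiset_esymm_cons_succ, derivation_multiset_esymm_eq_zero D hs]

end Derivation

/-- The polynomial `T ^ k + e₁ T ^ (k - 1) + ⋯ + e_k`, where `e_i = s.esymm i`, in Horner form. For
`k ≤ card s` it is the quotient of `∏ x ∈ s, (T + x)` by `T ^ (card s - k)`. -/
noncomputable def esymmHorner [CommSemiring R] (s : Multiset R) : ℕ → Polynomial R
  | 0 => 1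
  | k + 1 => esymmHorner s k * X + C (s.esymm (k + 1))

namespace esymmHorner

theorem isMonicOfDegree [CommSemiring R] [Nontrivial R] (s : Multiset R) (k : ℕ) :
    (esymmHorner s k).IsMonicOfDegree k := by
  induction k with
  | zero => exact Polynomial.isMonicOfDegree_zero_iff.2 rfl
  | succ k ih =>
    refine (ih.mul (Polynomial.isMonicOfDegree_X R)).add_right ?_
    rw [Polynomial.natDegree_C]
    exact k.succ_pos

theorem eval_neg_cons [CommRing R] (x : R) (s : Multiset R) (k : ℕ) :
    (esymmHorner (x ::ₘ s) k).eval (-x) = s.esymm k := by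
  induction k with
  | zero => simp [esymmHorner, multiset_esymm_zero]
  | succ k ih =>
    simp only [esymmHorner, Polynomial.eval_add, Polynomial.eval_mul_X, Polynomial.eval_C, ih,
      multiset_esymm_cons_succ]
    ring

end esymmHorner

end Multiset

section Jacobian

variable (R : Type*) [CommRing R]

theorem pderiv_esymm_succ_eq_eval_esymmHorner {σ : Type*} [Fintype σ] (j : σ) (k : ℕ) :
    MvPolynomial.pderiv j (MvPolynomial.esymm σ R (k + 1)) =
      (esymmHorner (Finset.univ.val.map (MvPolynomial.X (R := R))) k).eval
        (-MvPolynomial.X j) := by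
  classical
  let others : Multiset (MvPolynomial σ R) := (Finset.univ.erase j).val.map MvPolynomial.X
  have variables_eq_cons : Finset.univ.val.map MvPolynomial.X = MvPolynomial.X j ::ₘ others := by
    rw [← Multiset.map_cons, Finset.erase_val, Multiset.cons_erase (Finset.mem_univ j)]
  have pderiv_others : ∀ y ∈ others, MvPolynomial.pderiv j y = 0 := by
    intro y hy
    obtain ⟨i, hi, rfl⟩ := Multiset.mem_map.1 hy
    exact MvPolynomial.pderiv_X_of_ne (Finset.ne_of_mem_erase hi)
  rw [MvPolynomial.esymm_eq_multiset_esymm, variables_eq_cons, esymmHorner.eval_neg_cons,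
    derivation_multiset_esymm_cons_succ _ _ pderiv_others, MvPolynomial.pderiv_X_self,
    smul_eq_mul, mul_one]

theorem det_pderiv_esymm (n : ℕ) :
    Matrix.det (Matrix.of fun k j : Fin n =>
        MvPolynomial.pderiv j (MvPolynomial.esymm (Fin n) R ((k : ℕ) + 1))) =
      ∏ i : Fin n, ∏ j ∈ Finset.Ioi i, (MvPolynomial.X i - MvPolynomial.X j) := by
  nontriviality MvPolynomial (Fin n) R
  let p (k : Fin n) : Polynomial (MvPolynomial (Fin n) R) :=
    esymmHorner (Finset.univ.val.map MvPolynomial.X) k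
  calc
    _ = Matrix.det (Matrix.of fun j k : Fin n => (p k).eval (-MvPolynomial.X j)) := by
      rw [← Matrix.det_transpose]
      congr 1
      ext1 j k
      exact pderiv_esymm_succ_eq_eval_esymmHorner R j k
    _ = (Matrix.vandermonde fun j : Fin n => -MvPolynomial.X (R := R) j).det :=
      (Matrix.det_eval_matrixOfPolynomials_eq_det_vandermonde _ p
        (fun k => (esymmHorner.isMonicOfDegree _ k).natDegree_eq)
        (fun k => (esymmHorner.isMonicOfDegree _ k).monic)).symm
    _ = _ := by simp only [Matrix.det_vandermonde, neg_sub_neg]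

end Jacobian

/-- The Jacobian determinant of the elementary symmetric polynomials: for a
commutative ring `R`, `n ≥ 1` and `a₁,…,aₙ ∈ R`, the determinant of the `n×n`
matrix whose `(k,j)` entry is `(∂e_k/∂x_j)(a₁,…,aₙ)` equals
`∏_{1 ≤ i < j ≤ n} (a_i − a_j)`. -/
theorem stmt_5 {R : Type*} [CommRing R] (n : ℕ) (hn : 1 ≤ n) (a : Fin n → R) :
    Matrix.det (Matrix.of fun k j : Fin n =>
        MvPolynomial.eval a (MvPolynomial.pderiv j (MvPolynomial.esymm (Fin n) R ((k : ℕ) + 1))))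
      = ∏ i : Fin n, ∏ j ∈ Finset.Ioi i, (a i - a j) := by
  have h := congrArg (MvPolynomial.eval a) (det_pderiv_esymm R n)
  simpa only [RingHom.map_det, RingHom.mapMatrix_apply, Matrix.map, Matrix.of_apply, map_prod,
    map_sub, MvPolynomial.eval_X] using h
end

section
/- Let K be a field, L a finite Galois field extension of K, and q a prime with q ≠ char K. Then the image in the quotient group Kˣ/(Kˣ)^q of the subgroup {a ∈ Kˣ : a = b^q for some b ∈ L} is finite; equivalently, only finitely many cosets of the subgroup (Kˣ)^q of q-th powers in Kˣ contain an element admitting a q-th root in L. -/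
/-!
As in the snake lemma, the kernel of `Kˣ/(Kˣ)ⁿ → Lˣ/(Lˣ)ⁿ` is a quotient of the `n`-torsion of
`Lˣ/Kˣ`: if `a = b ^ n` with `a ∈ Kˣ`, then the class of `b` modulo `Kˣ` determines the class of
`a` modulo `(Kˣ)ⁿ`. If `L/K` is separable, then `b` lies in `Kˣ` as soon as all its conjugates
coincide, so `b ↦ (σ b / b)_σ`, with `σ` running over the `K`-embeddings of `L` into an
algebraically closed extension `Ω` of `L`, embeds `Lˣ/Kˣ` into a power of `Ωˣ`. For `L/K` finite
this is a finite power, whose `n`-torsion consists of finitely many tuples of roots of unity.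
-/

section CommGroup

variable {A B : Type*} [CommGroup A] [CommGroup B]

theorem finite_image_mk_of_finite_torsion_quotient_range {f : A →* B}
    (hf : Function.Injective f) (n : ℕ) (hfin : {x : B ⧸ f.range | x ^ n = 1}.Finite) :
    ((QuotientGroup.mk : A → A ⧸ (powMonoidHom n : A →* A).range) ''
      {a | ∃ b, f a = b ^ n}).Finite := by
  refine hfin.of_surjOn (fun x ↦ QuotientGroup.mk (Function.invFun f (x.out ^ n))) ?_
  rintro _ ⟨a, ⟨b, hab⟩, rfl⟩
  have torsion : (b : B ⧸ f.range) ^ n = 1 := by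
    rw [← QuotientGroup.mk_pow, QuotientGroup.eq_one_iff]
    exact ⟨a, hab⟩
  refine ⟨b, torsion, ?_⟩
  obtain ⟨⟨_, c, rfl⟩, out_eq⟩ := QuotientGroup.mk_out_eq_mul f.range b
  have out_pow : (b : B ⧸ f.range).out ^ n = f (a * c ^ n) := by
    rw [out_eq, mul_pow, ← hab, map_mul, map_pow]
  simp only [out_pow, Function.leftInverse_invFun hf _]
  exact QuotientGroup.mk_mul_of_mem a ⟨c, rfl⟩

end CommGroup

theorem finite_setOf_pi_units_pow_eq_one (ι R : Type*) [Finite ι] [CommRing R] [IsDomain R]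
    (n : ℕ) [NeZero n] : {u : ι → Rˣ | u ^ n = 1}.Finite := by
  have roots_finite : {z : Rˣ | z ^ n = 1}.Finite :=
    Set.finite_coe_iff.mp (inferInstanceAs (Finite (rootsOfUnity n R)))
  simpa only [funext_iff, Pi.pow_apply, Pi.one_apply, Set.mem_ofPred_eq] using
    Set.Finite.pi' fun _ : ι ↦ roots_finite

section Field

variable {K L Ω : Type*} [Field K] [Field L] [Field Ω] [Algebra K L] [Algebra K Ω]

theorem mem_range_algebraMap_of_forall_algHom_eq [Algebra.IsAlgebraic K L] [IsAlgClosed Ω]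
    {x : L} (hx : IsSeparable K x) {y : Ω} (h : ∀ σ : L →ₐ[K] Ω, σ x = y) :
    x ∈ (algebraMap K L).range := by
  have rootSet_subset : (minpoly K x).rootSet Ω ⊆ {y} := by
    rw [← Algebra.IsAlgebraic.range_eval_eq_rootSet_minpoly]
    exact Set.range_subset_iff.mpr h
  rw [← minpoly.natDegree_eq_one_iff]
  refine le_antisymm ?_ (minpoly.natDegree_pos hx.isIntegral)
  calc (minpoly K x).natDegree
      = Fintype.card ((minpoly K x).rootSet Ω) :=
        (Polynomial.card_rootSet_eq_natDegree hx (IsAlgClosed.splits _)).symm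
    _ ≤ Fintype.card ({y} : Set Ω) := Set.card_le_card rootSet_subset
    _ = 1 := Set.card_singleton y

variable [Algebra L Ω]

variable (K L Ω) in
/-- The homomorphism `b ↦ (σ b / b)_σ`, where `σ` runs over the `K`-embeddings of `L` into an
extension `Ω` of `L`: the analogue, for possibly non-normal `L/K`, of the Kummer cocycles
`σ ↦ σ b / b`, used to embed `Lˣ/Kˣ` into a power of `Ωˣ`. -/
def conjugateRatio : Lˣ →* ((L →ₐ[K] Ω) → Ωˣ) :=
  MonoidHom.pi fun σ ↦ Units.map (σ : L →* Ω) / Units.map (algebraMap L Ω : L →* Ω)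

theorem mem_ker_conjugateRatio_iff {b : Lˣ} :
    b ∈ (conjugateRatio K L Ω).ker ↔ ∀ σ : L →ₐ[K] Ω, σ b = algebraMap L Ω b := by
  rw [MonoidHom.mem_ker, funext_iff]
  exact forall_congr' fun σ ↦ div_eq_one.trans Units.ext_iff

theorem ker_conjugateRatio [Algebra.IsSeparable K L] [IsScalarTower K L Ω] [IsAlgClosed Ω] :
    (conjugateRatio K L Ω).ker = (Units.map (algebraMap K L : K →* L)).range := by
  ext b
  rw [mem_ker_conjugateRatio_iff]
  constructor
  · intro h
    obtain ⟨c, hc⟩ :=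
      mem_range_algebraMap_of_forall_algHom_eq (Algebra.IsSeparable.isSeparable K (b : L)) h
    have c_ne_zero : c ≠ 0 := by
      rintro rfl
      exact b.ne_zero (by rw [← hc, map_zero])
    exact ⟨Units.mk0 c c_ne_zero, Units.ext hc⟩
  · rintro ⟨c, rfl⟩ σ
    exact (σ.commutes c).trans (IsScalarTower.algebraMap_apply K L Ω c)

variable (K L) in
theorem finite_torsion_units_quotient_range_algebraMap [FiniteDimensional K L]
    [Algebra.IsSeparable K L] (n : ℕ) [NeZero n] :
    {x : Lˣ ⧸ (Units.map (algebraMap K L : K →* L)).range | x ^ n = 1}.Finite := by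
  rw [← ker_conjugateRatio (Ω := AlgebraicClosure L)]
  let ι := QuotientGroup.kerLift (conjugateRatio K L (AlgebraicClosure L))
  have ι_injective : Function.Injective ι := QuotientGroup.kerLift_injective _
  refine ((finite_setOf_pi_units_pow_eq_one _ (AlgebraicClosure L) n).preimage
    ι_injective.injOn).subset fun x hx ↦ ?_
  calc ι x ^ n = ι (x ^ n) := (map_pow ι x n).symm
    _ = ι 1 := congrArg ι hx
    _ = 1 := map_one ι

end Field

theorem stmt_6_general {K L : Type*} [Field K] [Field L] [Algebra K L]
    [FiniteDimensional K L] [Algebra.IsSeparable K L] (n : ℕ) [NeZero n] :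
    Set.Finite
      ((QuotientGroup.mk : Kˣ → Kˣ ⧸ (powMonoidHom n : Kˣ →* Kˣ).range) ''
        {a : Kˣ | ∃ b : L, algebraMap K L (a : K) = b ^ n}) := by
  have units_map_injective : Function.Injective (Units.map (algebraMap K L : K →* L)) :=
    Units.map_injective (algebraMap K L).injective
  refine (finite_image_mk_of_finite_torsion_quotient_range units_map_injective n
    (finite_torsion_units_quotient_range_algebraMap K L n)).subset (Set.image_mono ?_)
  rintro a ⟨b, hab⟩
  have b_isUnit : IsUnit b := by
    rw [← isUnit_pow_iff (NeZero.ne n), ← hab]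
    exact a.isUnit.map (algebraMap K L)
  exact ⟨b_isUnit.unit, Units.ext hab⟩

/-- Fact 5.1(1) (Poizat's lemma): if `L` is a finite Galois extension of `K` and
`q ≠ char K` is a prime, then the image in `Kˣ/(Kˣ)^q` of the set of `a ∈ Kˣ`
admitting a `q`-th root in `L` is finite. -/
theorem stmt_6 {K L : Type*} [Field K] [Field L] [Algebra K L]
    [FiniteDimensional K L] [IsGalois K L]
    (q : ℕ) (hq : q.Prime) (hchar : q ≠ ringChar K) :
    Set.Finite
      ((QuotientGroup.mk :
          Kˣ → Kˣ ⧸ (powMonoidHom q : Kˣ →* Kˣ).range) ''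
        {a : Kˣ | ∃ b : L, algebraMap K L (a : K) = b ^ q}) := by
  have : NeZero q := ⟨hq.ne_zero⟩
  exact stmt_6_general q
end

section
/- Let K be a field of characteristic p > 0 and L a finite Galois field extension of K. Then the image in the quotient group K/℘(K) of the additive subgroup {a ∈ K : a = b^p − b for some b ∈ L} is finite, where ℘(K) = {x^p − x : x ∈ K} is the image of the Artin–Schreier map. -/
/-!
Fix a Galois extension `M / K` and a `K`-embedding `ι : L → M`. If `a = ℘(b)` with `a ∈ K` and
`b ∈ L`, every `K`-embedding `τ : L → M` sends `b` to a root of `x ^ p - x = a`, so `τ ↦ τ b - ι b`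
takes values in `ker ℘ = 𝔽_p`. If `b` and `b'` give the same function, then `b - b'` has only one
conjugate, hence lies in `K` by Galois theory, and `a - a' = ℘(b - b')` vanishes in `K / ℘(K)`.
If there are finitely many embeddings, there are finitely many such functions, hence finitely many
classes. Since `x ^ p - x - a` is separable, only the separable closure of `K` in `L` matters.
-/

open Polynomial

section ArtinSchreierMap

/-- The Artin–Schreier map `℘`, `x ↦ x ^ p - x`, as an endomorphism of the additive group of a ring
of exponential characteristic `p`. -/
def artinSchreier (R : Type*) [CommRing R] (p : ℕ) [ExpChar R p] : R →+ R :=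
  (frobenius R p).toAddMonoidHom - AddMonoidHom.id R

theorem artinSchreier_apply {R : Type*} [CommRing R] (p : ℕ) [ExpChar R p] (x : R) :
    artinSchreier R p x = x ^ p - x :=
  rfl

theorem finite_ker_artinSchreier (F : Type*) [Field F] (p : ℕ) [Fact p.Prime] [CharP F p] :
    Finite (artinSchreier F p).ker := by
  have ker_eq_bot : ((artinSchreier F p).ker : Set F) = (⊥ : Subfield F) := by
    ext x
    rw [SetLike.mem_coe, AddMonoidHom.mem_ker, artinSchreier_apply, sub_eq_zero, SetLike.mem_coe,
      Subfield.mem_bot_iff_pow_eq_self F p]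
  have := Subfield.fintypeBot F p
  exact (ker_eq_bot ▸ Set.toFinite ((⊥ : Subfield F) : Set F)).to_subtype

theorem algHom_sub_algHom_mem_ker_artinSchreier {R A B : Type*} [CommRing R] [CommRing A]
    [CommRing B] [Algebra R A] [Algebra R B] {p : ℕ} [ExpChar B p] {a : R} {b : A}
    (hb : algebraMap R A a = b ^ p - b) (σ τ : A →ₐ[R] B) :
    σ b - τ b ∈ (artinSchreier B p).ker := by
  have apply_eq (φ : A →ₐ[R] B) : artinSchreier B p (φ b) = algebraMap R B a := by
    rw [artinSchreier_apply, ← map_pow, ← map_sub, ← hb, φ.commutes]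
  rw [AddMonoidHom.mem_ker, map_sub, apply_eq, apply_eq, sub_self]

end ArtinSchreierMap

theorem separable_X_pow_sub_X_sub_C {R : Type*} [CommRing R] (p : ℕ) [CharP R p] (a : R) :
    (X ^ p - X - C a : R[X]).Separable := by
  have derivative_eq : derivative (X ^ p - X - C a : R[X]) = -1 := by
    simp [derivative_X_pow]
  rw [separable_def, derivative_eq]
  exact isCoprime_one_right.neg_right

section FieldExtension

variable {K L M : Type*} [Field K] [Field L] [Field M] [Algebra K L] [Algebra K M] {p : ℕ}

theorem isSeparable_of_algebraMap_eq_pow_sub_self [CharP K p] {a : K} {b : L}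
    (hb : algebraMap K L a = b ^ p - b) : IsSeparable K b :=
  (separable_X_pow_sub_X_sub_C p a).of_dvd <| minpoly.dvd K b <| by simp [hb]

theorem mem_range_algebraMap_of_forall_algHom_apply_eq [IsGalois K M] (ι : L →ₐ[K] M) {x : L}
    (hx : ∀ τ : L →ₐ[K] M, τ x = ι x) : x ∈ Set.range (algebraMap K L) := by
  obtain ⟨c, hc⟩ := (InfiniteGalois.mem_range_algebraMap_iff_fixed (k := K) (ι x)).2
    fun σ ↦ hx (σ.toAlgHom.comp ι)
  exact ⟨c, ι.injective ((ι.commutes c).trans hc)⟩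

variable [Fact p.Prime] [CharP K p]

theorem mk_eq_mk_of_sub_mem_range_algebraMap {a a' : K} {b b' : L}
    (hb : algebraMap K L a = b ^ p - b) (hb' : algebraMap K L a' = b' ^ p - b')
    (hsub : b - b' ∈ Set.range (algebraMap K L)) :
    (a : K ⧸ (artinSchreier K p).range) = a' := by
  have : CharP L p := charP_of_injective_algebraMap' K p
  obtain ⟨c, hc⟩ := hsub
  refine QuotientAddGroup.eq_iff_sub_mem.2 ⟨c, (algebraMap K L).injective ?_⟩
  calc algebraMap K L (c ^ p - c) = (b - b') ^ p - (b - b') := by rw [map_sub, map_pow, hc]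
    _ = (b ^ p - b) - (b' ^ p - b') := by rw [sub_pow_char]; ring
    _ = algebraMap K L (a - a') := by rw [map_sub, hb, hb']

theorem finite_image_mk_of_finite_algHom [IsGalois K M] [Finite (L →ₐ[K] M)] (ι : L →ₐ[K] M) :
    ((QuotientAddGroup.mk : K → K ⧸ (artinSchreier K p).range) ''
      {a : K | ∃ b : L, algebraMap K L a = b ^ p - b}).Finite := by
  have : CharP M p := charP_of_injective_algebraMap' K p
  have := finite_ker_artinSchreier M p
  set A : Set K := {a | ∃ b : L, algebraMap K L a = b ^ p - b}
  choose b hb using fun a : A ↦ a.2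
  let conjDiff (a : A) (τ : L →ₐ[K] M) : (artinSchreier M p).ker :=
    ⟨τ (b a) - ι (b a), algHom_sub_algHom_mem_ker_artinSchreier (hb a) τ ι⟩
  have class_factorsThrough : Function.FactorsThrough
      (fun a : A ↦ (a : K ⧸ (artinSchreier K p).range)) conjDiff := by
    intro a a' h
    refine mk_eq_mk_of_sub_mem_range_algebraMap (hb a) (hb a')
      (mem_range_algebraMap_of_forall_algHom_apply_eq ι fun τ ↦ ?_)
    have hτ : τ (b a) - ι (b a) = τ (b a') - ι (b a') := congrArg Subtype.val (congrFun h τ)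
    rw [map_sub, map_sub, sub_eq_sub_iff_sub_eq_sub, hτ]
  rw [Set.image_eq_range, ← class_factorsThrough.extend_comp (fun _ ↦ 0)]
  exact (Set.finite_range _).subset (Set.range_comp_subset_range _ _)

end FieldExtension

theorem stmt_7_general {K L : Type*} [Field K] [Field L] [Algebra K L]
    [FiniteDimensional K (separableClosure K L)] (p : ℕ) [Fact p.Prime] [CharP K p] :
    ((QuotientAddGroup.mk : K → K ⧸ (artinSchreier K p).range) ''
      {a : K | ∃ b : L, algebraMap K L a = b ^ p - b}).Finite := by
  let ι : separableClosure K L →ₐ[K] SeparableClosure K := IsSepClosed.lift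
  refine (finite_image_mk_of_finite_algHom ι).subset (Set.image_mono ?_)
  rintro a ⟨b, hb⟩
  have b_mem : b ∈ separableClosure K L :=
    mem_separableClosure_iff.2 (isSeparable_of_algebraMap_eq_pow_sub_self hb)
  exact ⟨⟨b, b_mem⟩, Subtype.ext hb⟩

/-- Fact 5.1(2) (Poizat's lemma): if `K` has characteristic `p > 0` and `L` is a
finite Galois extension of `K`, then the image in `K/℘(K)` of the set of `a ∈ K`
of the form `b^p − b` with `b ∈ L` is finite, where `℘(x) = x^p − x` is the
Artin–Schreier map. -/
theorem stmt_7 {K L : Type*} [Field K] [Field L] [Algebra K L]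
    [FiniteDimensional K L] [IsGalois K L]
    (p : ℕ) [Fact p.Prime] [CharP K p] :
    Set.Finite
      ((QuotientAddGroup.mk :
          K → K ⧸ ((frobenius K p).toAddMonoidHom - AddMonoidHom.id K).range) ''
        {a : K | ∃ b : L, algebraMap K L a = b ^ p - b}) :=
  stmt_7_general p
end

section
/- Let K be a field. Suppose that for every finite Galois field extension L of K the following hold: (i) for every prime q with q ≠ char K, every element of Lˣ is a q-th power in L; and (ii) if char K = p > 0, then every element of L is of the form b^p − b for some b ∈ L. Then K is separably closed. -/
/-!
A proper finite Galois extension `M / K` of degree divisible by a prime `q` is cyclic of degree `q`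
over some intermediate field `F`, so it is enough to rule out such an `M / F`.

* If `q = char K`, the trace carries the surjectivity of `b ↦ b ^ q - b` from `M` down to `F`. By
  the additive form of Hilbert 90, `M` contains `b` with `σ b = b + 1` for a generator `σ` of the
  Galois group. Then `b ^ q - b` lies in `F`, hence equals `d ^ q - d` with `d ∈ F`, and `b - d` is
  a root of `X ^ q - X`, thus in the prime field and fixed by `σ`, a contradiction.
* If `q ≠ char K`, strong induction on `q` shows that `K` contains the `q`-th roots of unity,
  since they generate a Galois extension of degree less than `q`. By Kummer theory `M = F(b)` with
  `b ^ q = a ∈ F`, and taking norms of `b = c ^ q` makes `a` a `q`-th power in `F` up to sign. The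
  sign is harmless because `-1` is a `q`-th power in `K`.
-/

open Polynomial Module IntermediateField

section CyclicExtension

variable {F M : Type*} [Field F] [Field M] [Algebra F M] [FiniteDimensional F M] [IsGalois F M]

lemma mem_range_algebraMap_iff_generator_fixed {σ : Gal(M/F)}
    (hσ : ∀ τ, τ ∈ Subgroup.zpowers σ) {x : M} :
    x ∈ Set.range (algebraMap F M) ↔ σ x = x := by
  rw [IsGalois.mem_range_algebraMap_iff_fixed]
  refine ⟨fun hx ↦ hx σ, fun hx τ ↦ ?_⟩
  have hle : Subgroup.zpowers σ ≤ MulAction.stabilizer Gal(M/F) x := by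
    rwa [Subgroup.zpowers_le, MulAction.mem_stabilizer_iff]
  exact hle (hσ τ)

lemma finrank_ker_generator_sub_one {σ : Gal(M/F)} (hσ : ∀ τ, τ ∈ Subgroup.zpowers σ) :
    finrank F (LinearMap.ker (σ.toLinearMap - 1)) = 1 := by
  have hker : LinearMap.ker (σ.toLinearMap - 1) = LinearMap.range (Algebra.linearMap F M) := by
    ext x
    exact sub_eq_zero.trans (mem_range_algebraMap_iff_generator_fixed hσ).symm
  rw [hker, LinearMap.finrank_range_of_inj (algebraMap F M).injective, finrank_self]

/-- Additive Hilbert 90 for cyclic extensions: the range of `σ - 1` is the kernel of the trace, by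
comparison of dimensions. -/
lemma exists_generator_sub_eq_of_trace_eq_zero {σ : Gal(M/F)}
    (hσ : ∀ τ, τ ∈ Subgroup.zpowers σ) {x : M} (hx : Algebra.trace F M x = 0) :
    ∃ y, σ y - y = x := by
  set T : M →ₗ[F] M := σ.toLinearMap - 1
  have hle : LinearMap.range T ≤ LinearMap.ker (Algebra.trace F M) := by
    rintro _ ⟨y, rfl⟩
    exact (map_sub _ _ _).trans (sub_eq_zero.2 (Algebra.trace_eq_of_algEquiv σ y))
  have hrank : finrank F (LinearMap.range T) = finrank F (LinearMap.ker (Algebra.trace F M)) := by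
    have hT := T.finrank_range_add_finrank_ker
    have htr := (Algebra.trace F M).finrank_range_add_finrank_ker
    rw [finrank_ker_generator_sub_one hσ] at hT
    rw [LinearMap.range_eq_top.2 (Algebra.trace_surjective F M), finrank_top, finrank_self] at htr
    omega
  have hmem : x ∈ LinearMap.range T := by
    rw [Submodule.eq_of_le_of_finrank_eq hle hrank]
    exact hx
  exact hmem

end CyclicExtension

section ArtinSchreier

variable {F M : Type*} [Field F] [Field M] [Algebra F M] (p : ℕ) [Fact p.Prime] [CharP F p]

lemma map_eq_self_of_pow_char_eq_self (σ : Gal(M/F)) {x : M} (hx : x ^ p = x) : σ x = x := by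
  have : CharP M p := charP_of_injective_algebraMap' F p
  have hle : (⊥ : Subfield M) ≤ (σ : M →+* M).eqLocusField (RingHom.id M) := bot_le
  exact hle ((Subfield.mem_bot_iff_pow_eq_self M p).2 hx)

variable [FiniteDimensional F M]

lemma trace_pow_char [Algebra.IsSeparable F M] (x : M) :
    Algebra.trace F M (x ^ p) = Algebra.trace F M x ^ p := by
  have : CharP (AlgebraicClosure F) p := charP_of_injective_algebraMap' F p
  apply (algebraMap F (AlgebraicClosure F)).injective
  simp only [map_pow, trace_eq_sum_embeddings, sum_pow_char]

lemma exists_pow_char_sub_self_eq_of_isSeparable [Algebra.IsSeparable F M]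
    (h : ∀ x : M, ∃ b, b ^ p - b = x) (a : F) : ∃ d, d ^ p - d = a := by
  obtain ⟨x, rfl⟩ := Algebra.trace_surjective F M a
  obtain ⟨b, rfl⟩ := h x
  exact ⟨Algebra.trace F M b, by rw [map_sub, trace_pow_char]⟩

lemma not_char_dvd_finrank_of_isCyclic [IsGalois F M] [IsCyclic Gal(M/F)]
    (h : ∀ a : F, ∃ d, d ^ p - d = a) : ¬ p ∣ finrank F M := by
  intro hdvd
  have : CharP M p := charP_of_injective_algebraMap' F p
  obtain ⟨σ, hσ⟩ := IsCyclic.exists_generator (α := Gal(M/F))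
  have htrace : Algebra.trace F M 1 = 0 := by
    rw [← map_one (algebraMap F M), Algebra.trace_algebraMap, nsmul_one,
      CharP.cast_eq_zero_iff F p]
    exact hdvd
  obtain ⟨b, hb⟩ := exists_generator_sub_eq_of_trace_eq_zero hσ htrace
  have hfixed : σ (b ^ p - b) = b ^ p - b := by
    rw [map_sub, map_pow, sub_eq_iff_eq_add.1 hb, add_pow_char]
    ring
  obtain ⟨a, ha⟩ := (mem_range_algebraMap_iff_generator_fixed hσ).2 hfixed
  obtain ⟨d, rfl⟩ := h a
  have hroot : (b - algebraMap F M d) ^ p = b - algebraMap F M d := by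
    rw [map_sub, map_pow] at ha
    rw [sub_pow_char]
    linear_combination -ha
  have hσb : σ b = b := by
    simpa using map_eq_self_of_pow_char_eq_self p σ hroot
  exact one_ne_zero (hb.symm.trans (sub_eq_zero.2 hσb))

end ArtinSchreier

section Kummer

variable {F M : Type*} [Field F] [Field M] [Algebra F M] [FiniteDimensional F M]

lemma norm_eq_of_pow_finrank_eq {a : F} {b : M} (ha : b ^ finrank F M = algebraMap F M a)
    (hb : F⟮b⟯ = ⊤) : Algebra.norm F b = (-1) ^ finrank F M * -a := by
  have hint : IsIntegral F b := .of_finite F b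
  have hadjoin : Algebra.adjoin F {b} = ⊤ := by
    rw [← adjoin_simple_toSubalgebra_of_isAlgebraic hint.isAlgebraic, hb, top_toSubalgebra]
  have hmin : minpoly F b = X ^ finrank F M - C a :=
    (minpoly.eq_of_irreducible_of_monic (irreducible_X_pow_sub_C_of_root_adjoin_eq_top ha hb)
      (by simp [ha]) (monic_X_pow_sub_C a finrank_pos.ne')).symm
  have hnorm := Algebra.PowerBasis.norm_gen_eq_coeff_zero_minpoly
    (PowerBasis.ofAdjoinEqTop' hint hadjoin)
  rw [← PowerBasis.finrank, PowerBasis.ofAdjoinEqTop'_gen, hmin] at hnorm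
  simpa [coeff_X_pow, finrank_pos.ne] using hnorm

lemma finrank_eq_one_of_isCyclic_of_exists_pow_eq [IsGalois F M] [IsCyclic Gal(M/F)]
    (hζ : (primitiveRoots (finrank F M) F).Nonempty) (hneg : ∃ e : F, e ^ finrank F M = -1)
    (hpow : ∀ x : M, x ≠ 0 → ∃ y, y ^ finrank F M = x) : finrank F M = 1 := by
  by_contra hne
  obtain ⟨b, ⟨a, ha⟩, hb⟩ := exists_root_adjoin_eq_top_of_isCyclic F M hζ
  have ha_not_pow : ∀ d, d ^ finrank F M ≠ a := pow_ne_of_irreducible_X_pow_sub_C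
    (irreducible_X_pow_sub_C_of_root_adjoin_eq_top ha.symm hb) dvd_rfl hne
  have hb0 : b ≠ 0 := by
    rintro rfl
    rw [zero_pow finrank_pos.ne', map_eq_zero] at ha
    exact ha_not_pow 0 (by rw [ha, zero_pow finrank_pos.ne'])
  obtain ⟨e, he⟩ := hneg
  obtain ⟨c, hc⟩ := hpow b hb0
  have hnorm : Algebra.norm F c ^ finrank F M = (-1) ^ finrank F M * -a := by
    rw [← map_pow, hc, norm_eq_of_pow_finrank_eq ha.symm hb]
  apply ha_not_pow (-e * Algebra.norm F c)
  calc (-e * Algebra.norm F c) ^ finrank F M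
      = (-1) ^ finrank F M * e ^ finrank F M * Algebra.norm F c ^ finrank F M := by
        rw [mul_pow, neg_pow]
    _ = ((-1) ^ finrank F M * (-1) ^ finrank F M) * a := by rw [he, hnorm]; ring
    _ = a := by rw [← mul_pow, neg_one_mul, neg_neg, one_pow, one_mul]

end Kummer

section PrimeDegree

variable {K M : Type*} [Field K] [Field M] [Algebra K M] [FiniteDimensional K M] [IsGalois K M]

lemma exists_intermediateField_finrank_eq_of_prime_dvd {q : ℕ} (hq : q.Prime)
    (hdvd : q ∣ finrank K M) : ∃ F : IntermediateField K M, finrank F M = q := by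
  have : Fact q.Prime := ⟨hq⟩
  rw [← IsGalois.card_aut_eq_finrank] at hdvd
  obtain ⟨σ, hσ⟩ := exists_prime_orderOf_dvd_card' (G := Gal(M/K)) q hdvd
  exact ⟨fixedField (Subgroup.zpowers σ), by
    rw [finrank_fixedField_eq_card, Nat.card_zpowers, hσ]⟩

lemma isCyclic_aut_of_prime_finrank (h : (finrank K M).Prime) : IsCyclic Gal(M/K) :=
  have : Fact (finrank K M).Prime := ⟨h⟩
  isCyclic_of_prime_card (IsGalois.card_aut_eq_finrank K M)

lemma not_char_dvd_finrank (p : ℕ) [hp : Fact p.Prime] [CharP K p]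
    (h : ∀ x : M, ∃ b, b ^ p - b = x) : ¬ p ∣ finrank K M := by
  intro hdvd
  obtain ⟨F, hF⟩ := exists_intermediateField_finrank_eq_of_prime_dvd hp.out hdvd
  have : CharP F p := charP_of_injective_algebraMap' K p
  have : IsCyclic Gal(M/F) := isCyclic_aut_of_prime_finrank (hF ▸ hp.out)
  exact not_char_dvd_finrank_of_isCyclic (M := M) p
    (exists_pow_char_sub_self_eq_of_isSeparable p h) hF.symm.dvd

lemma not_prime_dvd_finrank_of_exists_pow_eq {q : ℕ} (hq : q.Prime)
    (hζ : (primitiveRoots q K).Nonempty) (hneg : ∃ e : K, e ^ q = -1)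
    (hpow : ∀ x : M, x ≠ 0 → ∃ y, y ^ q = x) : ¬ q ∣ finrank K M := by
  intro hdvd
  obtain ⟨F, rfl⟩ := exists_intermediateField_finrank_eq_of_prime_dvd hq hdvd
  have : IsCyclic Gal(M/F) := isCyclic_aut_of_prime_finrank hq
  obtain ⟨ζ, hζ⟩ := hζ
  obtain ⟨e, he⟩ := hneg
  have hζF : algebraMap K F ζ ∈ primitiveRoots (finrank F M) F :=
    (mem_primitiveRoots hq.pos).2
      ((isPrimitiveRoot_of_mem_primitiveRoots hζ).map_of_injective (algebraMap K F).injective)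
  have heF : algebraMap K F e ^ finrank F M = -1 := by rw [← map_pow, he, map_neg, map_one]
  exact hq.ne_one (finrank_eq_one_of_isCyclic_of_exists_pow_eq ⟨_, hζF⟩ ⟨_, heF⟩ hpow)

end PrimeDegree

section RootsOfUnity

variable {K E : Type*} [Field K] [Field E] [Algebra K E]

lemma finrank_adjoin_primitiveRoot_le_totient {n : ℕ} [NeZero n] {ζ : E}
    (hζ : IsPrimitiveRoot ζ n) : finrank K K⟮ζ⟯ ≤ n.totient := by
  have hroot : aeval ζ (cyclotomic n K) = 0 := by
    rw [← eval_map_algebraMap, map_cyclotomic]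
    exact hζ.isRoot_cyclotomic (NeZero.pos n)
  rw [adjoin.finrank (hζ.isIntegral (NeZero.pos n)).tower_top, ← natDegree_cyclotomic n K]
  exact natDegree_le_of_dvd (minpoly.dvd K ζ hroot) (cyclotomic_ne_zero n K)

lemma primitiveRoots_nonempty_of_forall_prime_not_dvd_finrank [Algebra.IsIntegral K E]
    {n : ℕ} [NeZero n] {ζ : E} (hζ : IsPrimitiveRoot ζ n)
    (h : ∀ l ≤ n.totient, l.Prime → ∀ L : FiniteGaloisIntermediateField K E, ¬ l ∣ finrank K L) :
    (primitiveRoots n K).Nonempty := by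
  have := hζ.intermediateField_adjoin_isCyclotomicExtension K
  have : IsGalois K K⟮ζ⟯ := IsCyclotomicExtension.isGalois {n} K K⟮ζ⟯
  have : FiniteDimensional K K⟮ζ⟯ := adjoin.finiteDimensional (Algebra.IsIntegral.isIntegral ζ)
  have hdeg : finrank K K⟮ζ⟯ = 1 := Nat.eq_one_iff_not_exists_prime_dvd.2 fun l hl hdvd ↦
    h l ((Nat.le_of_dvd finrank_pos hdvd).trans (finrank_adjoin_primitiveRoot_le_totient hζ)) hl
      ⟨K⟮ζ⟯⟩ hdvd
  obtain ⟨z, rfl⟩ := mem_bot.1 (finrank_adjoin_simple_eq_one_iff.1 hdeg)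
  exact ⟨z, (mem_primitiveRoots (NeZero.pos n)).2
    (hζ.of_map_of_injective (algebraMap K E).injective)⟩

end RootsOfUnity

section SeparableClosure

variable {K E : Type*} [Field K] [Field E] [Algebra K E] [IsSepClosure K E]

lemma not_prime_dvd_finrank_of_forall_exists_pow_eq
    (hpow : ∀ q : ℕ, q.Prime → q ≠ ringChar K → ∀ (L : FiniteGaloisIntermediateField K E) (x : L),
      x ≠ 0 → ∃ y, y ^ q = x)
    (hchar : ∀ L : FiniteGaloisIntermediateField K E, ¬ ringChar K ∣ finrank K L)
    (q : ℕ) (hq : q.Prime) (L : FiniteGaloisIntermediateField K E) : ¬ q ∣ finrank K L := by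
  induction q using Nat.strong_induction_on generalizing L with
  | _ q ih =>
  obtain rfl | hqK := eq_or_ne q (ringChar K)
  · exact hchar L
  have : IsSepClosed E := IsSepClosure.sep_closed K
  have : NeZero q := ⟨hq.ne_zero⟩
  have : NeZero (q : E) := ⟨CharP.cast_ne_zero_of_ne_of_prime E hq
    ((Algebra.ringChar_eq K E).symm.trans_ne hqK.symm)⟩
  obtain ⟨ζ, hζ⟩ := HasEnoughRootsOfUnity.exists_primitiveRoot E q
  have hroots : (primitiveRoots q K).Nonempty :=
    primitiveRoots_nonempty_of_forall_prime_not_dvd_finrank hζ fun l hl hlp L' ↦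
      ih l (hl.trans_lt (Nat.totient_lt q hq.one_lt)) hlp L'
  have hneg : ∃ e : K, e ^ q = -1 := by
    obtain ⟨e, he⟩ := hpow q hq hqK ⊥ (-1) (neg_ne_zero.2 one_ne_zero)
    obtain ⟨z, hz⟩ := mem_bot.1 e.2
    refine ⟨z, (algebraMap K E).injective ?_⟩
    rw [map_pow, hz, map_neg, map_one]
    exact congrArg Subtype.val he
  exact not_prime_dvd_finrank_of_exists_pow_eq hq hroots hneg (hpow q hq hqK L)

lemma isSepClosed_of_forall_finrank_eq_one
    (h : ∀ L : FiniteGaloisIntermediateField K E, finrank K L = 1) : IsSepClosed K := by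
  have : IsSepClosed E := IsSepClosure.sep_closed K
  rw [← IsSepClosed.separableClosure_eq_bot_iff K E, eq_bot_iff]
  intro x _
  have hbot := IntermediateField.finrank_eq_one_iff.1
    (h (FiniteGaloisIntermediateField.adjoin K {x}))
  exact hbot ▸ FiniteGaloisIntermediateField.subset_adjoin K {x} rfl

end SeparableClosure

/-- Fact 5.3 (Macintyre's Galois-theoretic criterion): if for every finite Galois
extension `L` of `K` (inside a fixed separable closure `K^sep`) every nonzero
element of `L` is a `q`-th power for every prime `q ≠ char K`, and (when
`char K = p > 0`) every element of `L` is of the form `b^p − b`, then `K` is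
separably closed. -/
theorem stmt_10 {K Ksep : Type*} [Field K] [Field Ksep] [Algebra K Ksep]
    [IsSepClosure K Ksep]
    (h : ∀ L : IntermediateField K Ksep, FiniteDimensional K L → IsGalois K L →
      (∀ q : ℕ, q.Prime → q ≠ ringChar K → ∀ x : L, x ≠ 0 → ∃ y : L, y ^ q = x) ∧
      (∀ p : ℕ, p ≠ 0 → CharP K p → ∀ x : L, ∃ b : L, b ^ p - b = x)) :
    IsSepClosed K := by
  have hchar (L : FiniteGaloisIntermediateField K Ksep) : ¬ ringChar K ∣ finrank K L := by
    obtain hp | hp := CharP.char_is_prime_or_zero K (ringChar K)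
    · have : Fact (ringChar K).Prime := ⟨hp⟩
      exact not_char_dvd_finrank (ringChar K)
        ((h L inferInstance inferInstance).2 _ hp.ne_zero inferInstance)
    · rw [hp, zero_dvd_iff]
      exact finrank_pos.ne'
  have hprime := not_prime_dvd_finrank_of_forall_exists_pow_eq
    (fun q hq hqK L ↦ (h L inferInstance inferInstance).1 q hq hqK) hchar
  exact isSepClosed_of_forall_finrank_eq_one fun L ↦
    Nat.eq_one_iff_not_exists_prime_dvd.2 fun q hq ↦ hprime q hq L
end

section
/- Let K be a formally real field (i.e., −1 is not a sum of squares in K) and let n ≥ 1. Then there do not exist elements a₁, …, aₙ ∈ K such that each of the n elements a₁ − a₂ − 1, a₂ − a₃ − 1, …, a_{n−1} − aₙ − 1, aₙ − a₁ − 1 is a sum of four squares in K. -/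
/-!
In a semireal ring the relation "`y - x - 1` is a sum of squares" is a strict partial order: it is
irreflexive because `-1` is not a sum of squares, and transitive because
`z - x - 1 = (z - y - 1) + (y - x - 1) + 1`. A strict order admits no cycle, since on a
finite set it has a minimal element.
-/

theorem exists_not_rel_apply {α : Type*} [Finite α] [Nonempty α] (r : α → α → Prop)
    [IsStrictOrder α r] (f : α → α) : ∃ x, ¬ r (f x) x := by
  have wf : WellFounded r := Finite.wellFounded_of_trans_of_irrefl r
  obtain ⟨x, -, x_minimal⟩ := wf.has_min Set.univ Set.univ_nonempty
  exact ⟨x, x_minimal (f x) (Set.mem_univ _)⟩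

section SumSqLT

variable {R : Type*} [NonAssocRing R]

/-- The strict order on a semireal ring that rules out cycles: `x` lies below `y` when `y - x - 1`
is a sum of squares. The number of squares is left unbounded to make the relation transitive: sums
of four squares need not be closed under addition. -/
def SumSqLT (x y : R) : Prop :=
  IsSumSq (y - x - 1)

theorem SumSqLT.trans {x y z : R} (hxy : SumSqLT x y) (hyz : SumSqLT y z) : SumSqLT x z := by
  have split : z - x - 1 = (z - y - 1) + (y - x - 1) + 1 := by abel
  rw [SumSqLT, split]
  exact (hyz.add hxy).add .one

theorem SumSqLT.irrefl [IsSemireal R] (x : R) : ¬ SumSqLT x x := by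
  simpa only [SumSqLT, sub_self, zero_sub] using IsSemireal.not_isSumSq_neg_one R

instance SumSqLT.isStrictOrder [IsSemireal R] : IsStrictOrder R SumSqLT where
  irrefl := SumSqLT.irrefl
  trans _ _ _ := SumSqLT.trans

end SumSqLT

theorem isSumSq_sum_four_sq {R : Type*} [Semiring R] (z₁ z₂ z₃ z₄ : R) :
    IsSumSq (z₁ ^ 2 + z₂ ^ 2 + z₃ ^ 2 + z₄ ^ 2) :=
  have sq (z : R) : IsSumSq (z ^ 2) := (IsSquare.sq z).isSumSq
  (((sq z₁).add (sq z₂)).add (sq z₃)).add (sq z₄)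

theorem stmt_11_general {R ι : Type*} [NonAssocRing R] [IsSemireal R] [Finite ι] [Nonempty ι]
    (f : ι → ι) : ¬ ∃ a : ι → R, ∀ i, IsSumSq (a i - a (f i) - 1) := by
  rintro ⟨a, ha⟩
  obtain ⟨i, hi⟩ := exists_not_rel_apply (a ⁻¹'o SumSqLT) f
  exact hi (ha i)

/-- Section 5.3 (Dittmann): if `K` is formally real (`−1` is not a sum of squares)
and `n ≥ 1`, then there is no cyclic tuple `a₁,…,aₙ ∈ K` such that each of
`a₁ − a₂ − 1, …, a_{n−1} − aₙ − 1, aₙ − a₁ − 1` is a sum of four squares in `K`. -/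
theorem stmt_11 {K : Type*} [Field K] (hreal : ¬ IsSumSq (-1 : K))
    (n : ℕ) (hn : 1 ≤ n) :
    ¬ ∃ a : ZMod n → K, ∀ i : ZMod n,
        ∃ z₁ z₂ z₃ z₄ : K,
          a i - a (i + 1) - 1 = z₁ ^ 2 + z₂ ^ 2 + z₃ ^ 2 + z₄ ^ 2 := by
  rintro ⟨a, ha⟩
  have : IsSemireal K := .of_not_isSumSq_neg_one hreal
  have : NeZero n := .of_pos hn
  refine stmt_11_general (fun i : ZMod n ↦ i + 1) ⟨a, fun i ↦ ?_⟩
  obtain ⟨z₁, z₂, z₃, z₄, h⟩ := ha i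
  exact h ▸ isSumSq_sum_four_sq z₁ z₂ z₃ z₄
end
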